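/- arXiv:2404.18482 — 2 statements merged into one kernel-verified Lean document; each statement's English description precedes it below -/
import Mathlib

section
/- There is a constant C = C(n) > 0 such that for all κ ≥ 1, 0 ≤ r ≤ 1, θ ∈ S^{n−1}, and every integer m ≥ 0, the m-th power of the spherical Laplacian applied to the plane wave ω ↦ e^{iκ r θ·ω} satisfies ‖(−Δ_{S^{n−1}})^m e^{iκ r θ·(·)}‖_{L²(S^{n−1})} ≤ C (C m κ)^{2m}. -/
open scoped RealInnerProductSpace
open MeasureTheory

/-- The Euclidean Laplacian `Δf(x) = Σᵢ ∂²f/∂xᵢ²` of `f : ℝ^n → ℂ`. -/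
noncomputable def euclideanLaplacian {n : ℕ} (f : EuclideanSpace ℝ (Fin n) → ℂ)
    (x : EuclideanSpace ℝ (Fin n)) : ℂ :=
  ∑ i : Fin n, fderiv ℝ (fun y => fderiv ℝ f y (EuclideanSpace.single i 1)) x
    (EuclideanSpace.single i 1)

/-- `−Δ_{S^{n−1}}`, acting on functions on `ℝ^n` via the degree-0 homogeneous
extension: `(negSphereLaplacian g)(ω) = −Δ(y ↦ g(y/|y|))(ω)`. -/
noncomputable def negSphereLaplacian {n : ℕ}
    (g : EuclideanSpace ℝ (Fin n) → ℂ) : EuclideanSpace ℝ (Fin n) → ℂ :=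
  fun ω => -euclideanLaplacian (fun y => g (‖y‖⁻¹ • y)) ω

/-!
A plane wave is a zonal function `ω ↦ F ⟪θ, ω⟫` with `F` entire of exponential type `κ`, and on
zonal functions `-Δ` acts as the ordinary differential operator `(z² - 1) ∂² + (n - 1) z ∂`. Cauchy
estimates bound it on a neighbourhood of `[-1, 1]` by the sup norm on a slightly larger one, the
radii growing by `1 / κ` at each step. After `m` steps one is at distance `m / κ` from the real
axis, where `‖F‖` has grown by at most `exp m`, and each step has cost a factor of order
`(κ + m)²`. This bounds `(-Δ)^m` uniformly on the sphere, hence in `L²`, since the surface measure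
is finite.
-/

open Set Metric Module Filter
open scoped Manifold Topology

section HausdorffMeasure

theorem hausdorffMeasure_image_lt_top_of_isCompact
    {V H M E : Type*} [NormedAddCommGroup V] [NormedSpace ℝ V] [FiniteDimensional ℝ V]
    [TopologicalSpace H] {I : ModelWithCorners ℝ V H} [TopologicalSpace M] [ChartedSpace H M]
    [NormedAddCommGroup E] [NormedSpace ℝ E] [MeasurableSpace E] [BorelSpace E]
    {f : M → E} (hf : ContMDiff I 𝓘(ℝ, E) 1 f) {s : Set M} (hs : IsCompact s) :
    μH[finrank ℝ V] (f '' s) < ⊤ := by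
  borelize V
  refine hs.induction_on (p := fun s => μH[finrank ℝ V] (f '' s) < ⊤) (by simp)
    (fun _ _ hst ht => (measure_mono (image_mono hst)).trans_lt ht)
    (fun _ _ hs ht => image_union .. ▸ measure_union_lt_top hs ht) fun x _ => ?_
  obtain ⟨K, t, ht, hlip⟩ :=
    (contMDiffAt_iff.1 (hf x)).2.exists_lipschitzOnWith I.convex_range
  obtain ⟨v, hv, hv_fin⟩ := (μH[finrank ℝ V] : Measure V).finiteAt_nhds (extChartAt I x x)
  have hU : extChartAt I x ⁻¹' (t ∩ v) ∩ (extChartAt I x).source ∈ 𝓝 x := by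
    refine inter_mem ?_ (extChartAt_source_mem_nhds x)
    rw [← mem_map, map_extChartAt_nhds]
    exact inter_mem ht (mem_nhdsWithin_of_mem_nhds hv)
  refine ⟨_, mem_nhdsWithin_of_mem_nhds hU, ?_⟩
  have hsub : f '' (extChartAt I x ⁻¹' (t ∩ v) ∩ (extChartAt I x).source) ⊆
      (f ∘ (extChartAt I x).symm) '' (t ∩ v) := by
    rintro _ ⟨y, ⟨hy, hy_source⟩, rfl⟩
    exact ⟨_, hy, congrArg f ((extChartAt I x).left_inv hy_source)⟩
  calc μH[finrank ℝ V] (f '' _)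
      ≤ μH[finrank ℝ V] ((f ∘ (extChartAt I x).symm) '' (t ∩ v)) := measure_mono hsub
    _ ≤ K ^ (finrank ℝ V : ℝ) * μH[finrank ℝ V] (t ∩ v) :=
      (hlip.mono inter_subset_left).hausdorffMeasure_image_le (Nat.cast_nonneg _)
    _ < ⊤ := ENNReal.mul_lt_top (ENNReal.rpow_lt_top_of_nonneg (Nat.cast_nonneg _)
      ENNReal.coe_ne_top) ((measure_mono inter_subset_right).trans_lt hv_fin)

theorem hausdorffMeasure_sphere_lt_top (E : Type*) [NormedAddCommGroup E]
    [InnerProductSpace ℝ E] [FiniteDimensional ℝ E] [MeasurableSpace E] [BorelSpace E] :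
    μH[(finrank ℝ E : ℝ) - 1] (sphere (0 : E) 1) < ⊤ := by
  obtain hE | hE := (finrank ℝ E).eq_zero_or_eq_succ_pred
  · have := finrank_zero_iff.1 hE
    simp [sphere_eq_empty_of_subsingleton]
  · generalize (finrank ℝ E).pred = k at hE
    have : Fact (finrank ℝ E = k + 1) := ⟨hE⟩
    have h := hausdorffMeasure_image_lt_top_of_isCompact
      (contMDiff_coe_sphere (E := E) (n := k) (m := 1)) isCompact_univ
    rw [image_univ, Subtype.range_coe] at h
    simpa [hE] using h

theorem rpow_setIntegral_norm_sq_le {X F : Type*} [MeasurableSpace X] [NormedAddCommGroup F]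
    {μ : Measure X} {s : Set X} (hs : μ s < ⊤) {f : X → F} {B : ℝ} (hB : 0 ≤ B)
    (hf : ∀ x ∈ s, ‖f x‖ ≤ B) :
    (∫ x in s, ‖f x‖ ^ 2 ∂μ) ^ (1 / 2 : ℝ) ≤ √(μ.real s) * B := by
  have hsq : ∀ x ∈ s, ‖‖f x‖ ^ 2‖ ≤ B ^ 2 := fun x hx => by
    rw [norm_pow, norm_norm]
    gcongr
    exact hf x hx
  have hint : ∫ x in s, ‖f x‖ ^ 2 ∂μ ≤ B ^ 2 * μ.real s :=
    (le_abs_self _).trans (norm_setIntegral_le_of_norm_le_const hs hsq)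
  calc (∫ x in s, ‖f x‖ ^ 2 ∂μ) ^ (1 / 2 : ℝ) ≤ √(B ^ 2 * μ.real s) := by
        rw [← Real.sqrt_eq_rpow]
        exact Real.sqrt_le_sqrt hint
    _ = √(μ.real s) * B := by rw [mul_comm, Real.sqrt_mul measureReal_nonneg, Real.sqrt_sq hB]

end HausdorffMeasure

section GegenbauerOperator

/-- The negated Gegenbauer operator `F ↦ (z² - 1) F'' + a z F'`. For `a = n - 1` it is
`-Δ_{S^{n-1}}` acting on zonal functions `ω ↦ F ⟪θ, ω⟫`; the variable is complex so that
Cauchy estimates apply. -/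
noncomputable def gegenbauerOp (a : ℂ) (F : ℂ → ℂ) : ℂ → ℂ :=
  fun z => (z ^ 2 - 1) * deriv (deriv F) z + a * z * deriv F z

/-- The strip `|Im z| ≤ ρ` cut off at `‖z‖ ≤ 1 + ρ`: a neighbourhood of `[-1, 1]` on which a
function of exponential type is bounded in terms of `ρ`, and the coefficients of `gegenbauerOp`
are under control. -/
def truncatedStrip (ρ : ℝ) : Set ℂ :=
  {z | ‖z‖ ≤ 1 + ρ ∧ |z.im| ≤ ρ}

theorem closedBall_subset_truncatedStrip {ρ δ : ℝ} {z : ℂ} (hz : z ∈ truncatedStrip ρ) :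
    closedBall z δ ⊆ truncatedStrip (ρ + δ) := by
  intro w hw
  have hwz : ‖w - z‖ ≤ δ := mem_closedBall_iff_norm.1 hw
  constructor
  · linarith [norm_le_norm_add_norm_sub' w z, hz.1]
  · have him : |w.im - z.im| ≤ ‖w - z‖ := Complex.abs_im_le_norm (w - z)
    linarith [abs_sub_abs_le_abs_sub w.im z.im, hz.2]

variable {a : ℂ} {F : ℂ → ℂ}

theorem differentiable_gegenbauerOp (hF : Differentiable ℂ F) :
    Differentiable ℂ (gegenbauerOp a F) :=
  (((differentiable_id.pow 2).sub_const 1).mul hF.deriv.deriv).add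
    ((differentiable_id.const_mul a).mul hF.deriv)

theorem differentiable_gegenbauerOp_iterate (hF : Differentiable ℂ F) (m : ℕ) :
    Differentiable ℂ ((gegenbauerOp a)^[m] F) :=
  Function.Iterate.rec _ hF (fun _ => differentiable_gegenbauerOp) m

theorem norm_gegenbauerOp_le {ρ δ B : ℝ} (hF : Differentiable ℂ F) (hρ : 0 ≤ ρ) (hδ : 0 < δ)
    (hδ1 : δ ≤ 1) (hB : ∀ z ∈ truncatedStrip (ρ + δ), ‖F z‖ ≤ B) {z : ℂ}
    (hz : z ∈ truncatedStrip ρ) :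
    ‖gegenbauerOp a F z‖ ≤ (4 + ‖a‖) * ((1 + ρ) / δ) ^ 2 * B := by
  have hsphere : ∀ w ∈ sphere z δ, ‖F w‖ ≤ B := fun w hw =>
    hB w (closedBall_subset_truncatedStrip hz (sphere_subset_closedBall hw))
  have hB0 : 0 ≤ B := (norm_nonneg _).trans
    (hB z (closedBall_subset_truncatedStrip hz (mem_closedBall_self hδ.le)))
  have hderiv : ‖deriv F z‖ ≤ B / δ :=
    Complex.norm_deriv_le_of_forall_mem_sphere_norm_le hδ hF.diffContOnCl hsphere
  have hderiv2 : ‖deriv (deriv F) z‖ ≤ 2 * B / δ ^ 2 := by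
    simpa [iteratedDeriv_succ] using
      Complex.norm_iteratedDeriv_le_of_forall_mem_sphere_norm_le 2 hδ hF.diffContOnCl hsphere
  have hquad : ‖z ^ 2 - 1‖ ≤ 2 * (1 + ρ) ^ 2 :=
    calc ‖z ^ 2 - 1‖
        ≤ ‖z‖ ^ 2 + 1 := norm_pow z 2 ▸ norm_one (α := ℂ) ▸ norm_sub_le (z ^ 2) 1
      _ ≤ (1 + ρ) ^ 2 + 1 := by gcongr; exact hz.1
      _ ≤ 2 * (1 + ρ) ^ 2 := by nlinarith
  have hratio : 1 ≤ (1 + ρ) / δ := (one_le_div hδ).2 (by linarith)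
  calc ‖gegenbauerOp a F z‖
      ≤ ‖z ^ 2 - 1‖ * ‖deriv (deriv F) z‖ + ‖a‖ * ‖z‖ * ‖deriv F z‖ := by
        rw [← norm_mul, ← norm_mul, ← norm_mul]
        exact norm_add_le _ _
    _ ≤ 2 * (1 + ρ) ^ 2 * (2 * B / δ ^ 2) + ‖a‖ * (1 + ρ) * (B / δ) := by
        gcongr
        exact hz.1
    _ = 4 * ((1 + ρ) / δ) ^ 2 * B + ‖a‖ * ((1 + ρ) / δ) * B := by ring
    _ ≤ 4 * ((1 + ρ) / δ) ^ 2 * B + ‖a‖ * ((1 + ρ) / δ) ^ 2 * B := by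
        gcongr
        exact le_self_pow₀ hratio two_ne_zero
    _ = (4 + ‖a‖) * ((1 + ρ) / δ) ^ 2 * B := by ring

theorem norm_gegenbauerOp_iterate_le {ρ δ B : ℝ} (hF : Differentiable ℂ F) (hρ : 0 ≤ ρ)
    (hδ : 0 < δ) (hδ1 : δ ≤ 1) (m : ℕ) (hB : ∀ z ∈ truncatedStrip (ρ + m * δ), ‖F z‖ ≤ B)
    {z : ℂ} (hz : z ∈ truncatedStrip ρ) :
    ‖(gegenbauerOp a)^[m] F z‖ ≤ ((4 + ‖a‖) * ((1 + ρ + m * δ) / δ) ^ 2) ^ m * B := by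
  induction m generalizing ρ z with
  | zero => simpa using hB z (by simpa using hz)
  | succ m ih =>
    have hradius : ρ + δ + m * δ = ρ + (m + 1 : ℕ) * δ := by push_cast; ring
    have hiter : ∀ w ∈ truncatedStrip (ρ + δ), ‖(gegenbauerOp a)^[m] F w‖ ≤
        ((4 + ‖a‖) * ((1 + ρ + (m + 1 : ℕ) * δ) / δ) ^ 2) ^ m * B := fun w hw => by
      simpa only [add_assoc, hradius] using
        ih (ρ := ρ + δ) (by positivity) (by rwa [hradius]) hw
    have hB0 := (norm_nonneg _).trans
      (hiter z (closedBall_subset_truncatedStrip hz (mem_closedBall_self hδ.le)))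
    rw [Function.iterate_succ_apply']
    calc ‖gegenbauerOp a ((gegenbauerOp a)^[m] F) z‖
        ≤ (4 + ‖a‖) * ((1 + ρ) / δ) ^ 2 *
            (((4 + ‖a‖) * ((1 + ρ + (m + 1 : ℕ) * δ) / δ) ^ 2) ^ m * B) :=
          norm_gegenbauerOp_le (differentiable_gegenbauerOp_iterate hF m) hρ hδ hδ1 hiter hz
      _ ≤ (4 + ‖a‖) * ((1 + ρ + (m + 1 : ℕ) * δ) / δ) ^ 2 *
            (((4 + ‖a‖) * ((1 + ρ + (m + 1 : ℕ) * δ) / δ) ^ 2) ^ m * B) := by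
          gcongr ?_ * (?_ / _) ^ 2 * _
          exact le_add_of_nonneg_right (by positivity)
      _ = ((4 + ‖a‖) * ((1 + ρ + (m + 1 : ℕ) * δ) / δ) ^ 2) ^ (m + 1) * B := by ring

theorem norm_gegenbauerOp_iterate_le_of_exponentialType {κ A : ℝ} (hF : Differentiable ℂ F)
    (hκ : 1 ≤ κ) (hgrowth : ∀ z, ‖F z‖ ≤ A * Real.exp (κ * |z.im|)) (m : ℕ) {s : ℝ}
    (hs : |s| ≤ 1) :
    ‖(gegenbauerOp a)^[m] F s‖ ≤ ((4 + ‖a‖) * (κ + m) ^ 2) ^ m * (A * Real.exp m) := by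
  have hκ0 : 0 < κ := by linarith
  have hA : 0 ≤ A := by simpa using (norm_nonneg _).trans (hgrowth 0)
  -- With discs of radius `κ⁻¹`, all `m` Cauchy estimates together enlarge `‖F‖` by only `exp m`.
  have hB : ∀ z ∈ truncatedStrip (0 + m * κ⁻¹), ‖F z‖ ≤ A * Real.exp m := fun z hz => by
    refine (hgrowth z).trans ?_
    gcongr
    calc κ * |z.im| ≤ κ * (0 + m * κ⁻¹) := by gcongr; exact hz.2
      _ = m := by field_simp; ring
  have hmem : (s : ℂ) ∈ truncatedStrip 0 := by simpa [truncatedStrip] using hs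
  have hradius : (1 + 0 + m * κ⁻¹) / κ⁻¹ = κ + m := by
    field_simp
    ring
  simpa only [hradius] using norm_gegenbauerOp_iterate_le (a := a) hF le_rfl (inv_pos.2 hκ0)
    (inv_le_one_of_one_le₀ hκ) m hB hmem

end GegenbauerOperator

section SphereLaplacian

theorem fderiv_fderiv_comp_apply {E : Type*} [NormedAddCommGroup E] [NormedSpace ℝ E] {F : ℂ → ℂ}
    (hF : Differentiable ℂ F) {u : E → ℂ} {x : E} (hu : ContDiffAt ℝ 2 u x) (e : E) :
    fderiv ℝ (fun y => fderiv ℝ (fun z => F (u z)) y e) x e =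
      deriv (deriv F) (u x) * fderiv ℝ u x e ^ 2 +
        deriv F (u x) * fderiv ℝ (fun y => fderiv ℝ u y e) x e := by
  have hu_near : ∀ᶠ y in 𝓝 x, DifferentiableAt ℝ u y :=
    (hu.eventually (by simp)).mono fun y hy => hy.differentiableAt two_ne_zero
  have hfirst : (fun y => fderiv ℝ (fun z => F (u z)) y e) =ᶠ[𝓝 x]
      fun y => deriv F (u y) * fderiv ℝ u y e := by
    filter_upwards [hu_near] with y hy
    change fderiv ℝ (F ∘ u) y e = _
    rw [((hF (u y)).hasDerivAt.comp_hasFDerivAt y hy.hasFDerivAt).fderiv]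
    rfl
  have hF'u : HasFDerivAt (fun y => deriv F (u y)) _ x :=
    (hF.deriv (u x)).hasDerivAt.comp_hasFDerivAt x hu_near.self_of_nhds.hasFDerivAt
  have hu_e : DifferentiableAt ℝ (fun y => fderiv ℝ u y e) x :=
    ((hu.fderiv_right (m := 1) le_rfl).differentiableAt one_ne_zero).clm_apply
      (differentiableAt_const e)
  rw [hfirst.fderiv_eq, (hF'u.fun_mul hu_e.hasFDerivAt).fderiv]
  simp only [add_apply, smul_apply, smul_eq_mul]
  ring

variable {n : ℕ}

theorem euclideanLaplacian_comp {F : ℂ → ℂ} (hF : Differentiable ℂ F)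
    {u : EuclideanSpace ℝ (Fin n) → ℂ} {x : EuclideanSpace ℝ (Fin n)} (hu : ContDiffAt ℝ 2 u x) :
    euclideanLaplacian (fun y => F (u y)) x =
      deriv (deriv F) (u x) * ∑ i, fderiv ℝ u x (EuclideanSpace.single i 1) ^ 2 +
        deriv F (u x) * euclideanLaplacian u x := by
  simp only [euclideanLaplacian, fderiv_fderiv_comp_apply hF hu, Finset.sum_add_distrib,
    Finset.mul_sum]

theorem euclideanLaplacian_congr {f g : EuclideanSpace ℝ (Fin n) → ℂ}
    {x : EuclideanSpace ℝ (Fin n)} (h : f =ᶠ[𝓝 x] g) :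
    euclideanLaplacian f x = euclideanLaplacian g x := by
  refine Finset.sum_congr rfl fun i _ => ?_
  have hi : (fun y => fderiv ℝ f y (EuclideanSpace.single i 1)) =ᶠ[𝓝 x]
      fun y => fderiv ℝ g y (EuclideanSpace.single i 1) :=
    h.fderiv.fun_comp (· (EuclideanSpace.single i 1))
  rw [hi.fderiv_eq]

theorem negSphereLaplacian_congr {f g : EuclideanSpace ℝ (Fin n) → ℂ}
    (h : EqOn f g (sphere 0 1)) {x : EuclideanSpace ℝ (Fin n)} (hx : x ≠ 0) :
    negSphereLaplacian f x = negSphereLaplacian g x := by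
  refine congrArg Neg.neg (euclideanLaplacian_congr ?_)
  filter_upwards [isOpen_ne.mem_nhds hx] with y hy
  exact h (by simp [norm_smul, hy])

section ZonalCoord

variable {E : Type*} [NormedAddCommGroup E] [InnerProductSpace ℝ E]

/-- The height `⟪θ, ·⟫` on the unit sphere, extended to be homogeneous of degree `0`. It is
complex-valued so that entire functions can be composed with it; its value at `0` is junk. -/
noncomputable def zonalCoord (θ y : E) : ℂ := (⟪θ, ‖y‖⁻¹ • y⟫ : ℝ)

theorem contDiffAt_zonalCoord {k : ℕ∞} (θ : E) {y : E} (hy : y ≠ 0) :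
    ContDiffAt ℝ k (zonalCoord θ) y :=
  Complex.ofRealCLM.contDiff.contDiffAt.comp y <| contDiffAt_const.inner ℝ <|
    ((contDiffAt_norm ℝ hy).inv (norm_ne_zero_iff.2 hy)).smul contDiffAt_id

theorem hasFDerivAt_norm_inv {y : E} (hy : y ≠ 0) :
    HasFDerivAt (fun z : E => ‖z‖⁻¹) (-‖y‖⁻¹ ^ 3 • innerSL ℝ y) y := by
  have hnorm : ‖y‖ ≠ 0 := norm_ne_zero_iff.2 hy
  have hsqrt := (hasStrictFDerivAt_norm_sq y).hasFDerivAt.sqrt (pow_ne_zero 2 hnorm)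
  simp only [Real.sqrt_sq (norm_nonneg _)] at hsqrt
  refine ((hasDerivAt_inv hnorm).comp_hasFDerivAt y hsqrt).congr_fderiv ?_
  ext v
  simp only [neg_smul, neg_apply, smul_apply, coe_innerSL_apply, nsmul_eq_mul, smul_eq_mul,
    Nat.cast_ofNat]
  field_simp

theorem fderiv_zonalCoord_apply (θ : E) {y : E} (hy : y ≠ 0) (e : E) :
    fderiv ℝ (zonalCoord θ) y e =
      (‖y‖⁻¹ * ⟪θ, e⟫ - ‖y‖⁻¹ ^ 3 * (⟪θ, y⟫ * ⟪y, e⟫) : ℝ) := by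
  have hreal : HasFDerivAt (fun z => ‖z‖⁻¹ * ⟪θ, z⟫) _ y :=
    (hasFDerivAt_norm_inv hy).mul (innerSL ℝ θ).hasFDerivAt
  have h := Complex.ofRealCLM.hasFDerivAt.comp y hreal
  have hcoord : zonalCoord θ = Complex.ofRealCLM ∘ fun z => ‖z‖⁻¹ * ⟪θ, z⟫ := by
    funext z
    simp [zonalCoord, inner_smul_right]
  rw [hcoord, h.fderiv, ContinuousLinearMap.comp_apply, Complex.ofRealCLM_apply]
  congr 1
  simp only [add_apply, smul_apply, coe_innerSL_apply, smul_eq_mul]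
  ring

theorem fderiv_fderiv_zonalCoord_apply (θ : E) {ω : E} (hω : ‖ω‖ = 1) (e : E) :
    fderiv ℝ (fun y => fderiv ℝ (zonalCoord θ) y e) ω e =
      (3 * ⟪θ, ω⟫ * ⟪ω, e⟫ ^ 2 - 2 * (⟪θ, e⟫ * ⟪ω, e⟫) - ⟪θ, ω⟫ * ‖e‖ ^ 2 : ℝ) := by
  have hω0 : ω ≠ 0 := norm_ne_zero_iff.1 (hω ▸ one_ne_zero)
  have hfirst : (fun y => fderiv ℝ (zonalCoord θ) y e) =ᶠ[𝓝 ω] Complex.ofRealCLM ∘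
      fun y => ‖y‖⁻¹ * ⟪θ, e⟫ - ‖y‖⁻¹ ^ 3 * (⟪θ, y⟫ * ⟪y, e⟫) := by
    filter_upwards [isOpen_ne.mem_nhds hω0] with y hy
    exact fderiv_zonalCoord_apply θ hy e
  have hinv := hasFDerivAt_norm_inv hω0
  have hθ : HasFDerivAt (fun y => ⟪θ, y⟫) (innerSL ℝ θ) ω := (innerSL ℝ θ).hasFDerivAt
  have he : HasFDerivAt (fun y => ⟪y, e⟫) (innerSL ℝ e) ω := by
    simpa only [coe_innerSL_apply, real_inner_comm e] using (innerSL ℝ e).hasFDerivAt (x := ω)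
  have hreal : HasFDerivAt
      (fun y => ‖y‖⁻¹ * ⟪θ, e⟫ - ‖y‖⁻¹ ^ 3 * (⟪θ, y⟫ * ⟪y, e⟫)) _ ω :=
    (hinv.mul_const ⟪θ, e⟫).sub ((hinv.pow 3).mul (hθ.mul he))
  rw [hfirst.fderiv_eq, (Complex.ofRealCLM.hasFDerivAt.comp ω hreal).fderiv,
    ContinuousLinearMap.comp_apply, Complex.ofRealCLM_apply]
  congr 1
  simp only [sub_apply, add_apply, smul_apply, coe_innerSL_apply, smul_eq_mul, nsmul_eq_mul,
    real_inner_self_eq_norm_sq, hω]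
  push_cast
  ring

end ZonalCoord

theorem sum_inner_single_mul_inner_single (x y : EuclideanSpace ℝ (Fin n)) :
    ∑ i, ⟪x, EuclideanSpace.single i (1 : ℝ)⟫ * ⟪y, EuclideanSpace.single i (1 : ℝ)⟫ = ⟪x, y⟫ := by
  simp [PiLp.inner_apply, mul_comm]

theorem sum_fderiv_zonalCoord_sq {θ ω : EuclideanSpace ℝ (Fin n)} (hθ : ‖θ‖ = 1) (hω : ‖ω‖ = 1) :
    ∑ i, fderiv ℝ (zonalCoord θ) ω (EuclideanSpace.single i 1) ^ 2 =
      (1 - ⟪θ, ω⟫ ^ 2 : ℝ) := by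
  have hω0 : ω ≠ 0 := norm_ne_zero_iff.1 (hω ▸ one_ne_zero)
  have hexpand (i : Fin n) :
      fderiv ℝ (zonalCoord θ) ω (EuclideanSpace.single i 1) ^ 2 =
        (⟪θ, EuclideanSpace.single i 1⟫ * ⟪θ, EuclideanSpace.single i 1⟫ -
          2 * ⟪θ, ω⟫ * (⟪θ, EuclideanSpace.single i 1⟫ * ⟪ω, EuclideanSpace.single i 1⟫) +
          ⟪θ, ω⟫ ^ 2 * (⟪ω, EuclideanSpace.single i 1⟫ * ⟪ω, EuclideanSpace.single i 1⟫) : ℝ) := by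
    rw [fderiv_zonalCoord_apply θ hω0, hω]
    push_cast
    ring
  simp only [hexpand, ← Complex.ofReal_sum, Finset.sum_add_distrib, Finset.sum_sub_distrib,
    ← Finset.mul_sum, sum_inner_single_mul_inner_single, real_inner_self_eq_norm_sq, hθ, hω]
  congr 1
  ring

theorem euclideanLaplacian_zonalCoord (θ : EuclideanSpace ℝ (Fin n))
    {ω : EuclideanSpace ℝ (Fin n)} (hω : ‖ω‖ = 1) :
    euclideanLaplacian (zonalCoord θ) ω = (-(n - 1) * ⟪θ, ω⟫ : ℝ) := by
  simp only [euclideanLaplacian, fderiv_fderiv_zonalCoord_apply θ hω, ← Complex.ofReal_sum,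
    Finset.sum_sub_distrib, ← Finset.mul_sum, pow_two ⟪ω, _⟫, sum_inner_single_mul_inner_single,
    real_inner_self_eq_norm_sq, hω]
  simp only [PiLp.norm_single, norm_one, Finset.sum_const, Finset.card_univ, Fintype.card_fin,
    nsmul_eq_mul]
  congr 1
  ring

theorem negSphereLaplacian_zonal {F : ℂ → ℂ} (hF : Differentiable ℂ F)
    {θ ω : EuclideanSpace ℝ (Fin n)} (hθ : ‖θ‖ = 1) (hω : ‖ω‖ = 1) :
    negSphereLaplacian (fun ζ => F (⟪θ, ζ⟫ : ℝ)) ω = gegenbauerOp (n - 1) F (⟪θ, ω⟫ : ℝ) := by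
  have hω0 : ω ≠ 0 := norm_ne_zero_iff.1 (hω ▸ one_ne_zero)
  have hcoord : zonalCoord θ ω = (⟪θ, ω⟫ : ℝ) := by simp [zonalCoord, hω]
  have h := euclideanLaplacian_comp hF (contDiffAt_zonalCoord (k := 2) θ hω0)
  rw [sum_fderiv_zonalCoord_sq hθ hω, euclideanLaplacian_zonalCoord θ hω, hcoord] at h
  refine (congrArg Neg.neg h).trans ?_
  simp only [gegenbauerOp]
  push_cast
  ring

theorem negSphereLaplacian_iterate_zonal {F : ℂ → ℂ} (hF : Differentiable ℂ F)
    {θ : EuclideanSpace ℝ (Fin n)} (hθ : ‖θ‖ = 1) (m : ℕ) {ω : EuclideanSpace ℝ (Fin n)}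
    (hω : ‖ω‖ = 1) :
    (negSphereLaplacian^[m] fun ζ => F (⟪θ, ζ⟫ : ℝ)) ω =
      (gegenbauerOp (n - 1))^[m] F (⟪θ, ω⟫ : ℝ) := by
  induction m generalizing ω with
  | zero => rfl
  | succ m ih =>
    have hω0 : ω ≠ 0 := norm_ne_zero_iff.1 (hω ▸ one_ne_zero)
    rw [Function.iterate_succ_apply', Function.iterate_succ_apply',
      ← negSphereLaplacian_zonal (differentiable_gegenbauerOp_iterate hF m) hθ hω]
    exact negSphereLaplacian_congr (fun ζ hζ => ih (mem_sphere_zero_iff_norm.1 hζ)) hω0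

end SphereLaplacian

theorem pow_mul_exp_le_pow_two_mul {b κ : ℝ} (hb : 0 ≤ b) (hκ : 1 ≤ κ) (m : ℕ) :
    (b * (κ + m) ^ 2) ^ m * Real.exp m ≤ (4 * (b + 1) * m * κ) ^ (2 * m) := by
  obtain rfl | hm := m.eq_zero_or_pos
  · simp
  have hm1 : (1 : ℝ) ≤ m := by exact_mod_cast hm
  have hsum : κ + m ≤ 2 * (m * κ) := by nlinarith
  have hconst : b * 3 * 4 ≤ (4 * (b + 1)) ^ 2 := by nlinarith
  calc (b * (κ + m) ^ 2) ^ m * Real.exp m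
      = (b * Real.exp 1 * (κ + m) ^ 2) ^ m := by
        rw [← Real.exp_one_pow, ← mul_pow]
        ring
    _ ≤ (b * 3 * (2 * (m * κ)) ^ 2) ^ m := by
        gcongr
        exact Real.exp_one_lt_three.le
    _ = (b * 3 * 4 * (m * κ) ^ 2) ^ m := by ring
    _ ≤ ((4 * (b + 1)) ^ 2 * (m * κ) ^ 2) ^ m := by gcongr
    _ = (4 * (b + 1) * m * κ) ^ (2 * m) := by
        rw [pow_mul]
        ring

theorem norm_negSphereLaplacian_iterate_zonal_le {n : ℕ} {κ A : ℝ} {F : ℂ → ℂ} (hκ : 1 ≤ κ)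
    (hF : Differentiable ℂ F) (hgrowth : ∀ z, ‖F z‖ ≤ A * Real.exp (κ * |z.im|))
    {θ ω : EuclideanSpace ℝ (Fin n)} (hθ : ‖θ‖ = 1) (hω : ‖ω‖ = 1) (m : ℕ) :
    ‖(negSphereLaplacian^[m] fun ζ => F (⟪θ, ζ⟫ : ℝ)) ω‖ ≤
      A * (4 * (4 + ‖(n - 1 : ℂ)‖ + 1) * m * κ) ^ (2 * m) := by
  have hA : 0 ≤ A := by simpa using (norm_nonneg _).trans (hgrowth 0)
  have hinner : |⟪θ, ω⟫| ≤ 1 := by simpa [hθ, hω] using abs_real_inner_le_norm θ ω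
  rw [negSphereLaplacian_iterate_zonal hF hθ m hω]
  calc _ ≤ ((4 + ‖(n - 1 : ℂ)‖) * (κ + m) ^ 2) ^ m * (A * Real.exp m) :=
        norm_gegenbauerOp_iterate_le_of_exponentialType hF hκ hgrowth m hinner
    _ = A * (((4 + ‖(n - 1 : ℂ)‖) * (κ + m) ^ 2) ^ m * Real.exp m) := by ring
    _ ≤ A * (4 * (4 + ‖(n - 1 : ℂ)‖ + 1) * m * κ) ^ (2 * m) := by
        gcongr
        exact pow_mul_exp_le_pow_two_mul (by positivity) hκ m

theorem stmt_7_general (n : ℕ) :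
    ∃ C : ℝ, 0 < C ∧ ∀ (κ A : ℝ) (F : ℂ → ℂ), 1 ≤ κ → Differentiable ℂ F →
      (∀ z, ‖F z‖ ≤ A * Real.exp (κ * |z.im|)) →
      ∀ θ : EuclideanSpace ℝ (Fin n), ‖θ‖ = 1 → ∀ m : ℕ,
        (∫ ω in sphere (0 : EuclideanSpace ℝ (Fin n)) 1,
            ‖(negSphereLaplacian^[m] fun ζ => F (⟪θ, ζ⟫ : ℝ)) ω‖ ^ 2
          ∂(μH[(n : ℝ) - 1])) ^ (1 / 2 : ℝ)
        ≤ A * (C * (C * m * κ) ^ (2 * m)) := by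
  set V := μH[(n : ℝ) - 1].real (sphere (0 : EuclideanSpace ℝ (Fin n)) 1)
  set b := 4 * (4 + ‖(n - 1 : ℂ)‖ + 1)
  refine ⟨√V + b, by positivity, fun κ A F hκ hF hgrowth θ hθ m => ?_⟩
  have hA : 0 ≤ A := by simpa using (norm_nonneg _).trans (hgrowth 0)
  have hsphere : μH[(n : ℝ) - 1] (sphere (0 : EuclideanSpace ℝ (Fin n)) 1) < ⊤ := by
    simpa using hausdorffMeasure_sphere_lt_top (EuclideanSpace ℝ (Fin n))
  calc _ ≤ √V * (A * (b * m * κ) ^ (2 * m)) :=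
        rpow_setIntegral_norm_sq_le hsphere (by positivity) fun ω hω =>
          norm_negSphereLaplacian_iterate_zonal_le hκ hF hgrowth hθ
            (mem_sphere_zero_iff_norm.1 hω) m
    _ = A * (√V * (b * m * κ) ^ (2 * m)) := by ring
    _ ≤ A * ((√V + b) * ((√V + b) * m * κ) ^ (2 * m)) := by
        gcongr
        · exact le_add_of_nonneg_right (by positivity)
        · exact le_add_of_nonneg_left (by positivity)

theorem norm_exp_I_mul_mul_le {t κ : ℝ} (ht : |t| ≤ κ) (z : ℂ) :
    ‖Complex.exp (Complex.I * t * z)‖ ≤ Real.exp (κ * |z.im|) := by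
  rw [Complex.norm_exp, Real.exp_le_exp]
  calc (Complex.I * t * z).re = -(t * z.im) := by simp
    _ ≤ |t| * |z.im| := (neg_le_abs _).trans_eq (abs_mul t z.im)
    _ ≤ κ * |z.im| := by gcongr

/-- There is `C = C(n) > 0` such that for all `κ ≥ 1`, `0 ≤ r ≤ 1`, unit `θ` and
integers `m ≥ 0`, `‖(−Δ_{S^{n−1}})^m e^{iκrθ·(·)}‖_{L²(S^{n−1})} ≤ C (Cmκ)^{2m}`,
the `L²` norm being w.r.t. (n−1)-dimensional Hausdorff (surface) measure. -/
theorem stmt_7 (n : ℕ) (hn : 2 ≤ n) :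
    ∃ C : ℝ, 0 < C ∧ ∀ (κ r : ℝ), 1 ≤ κ → 0 ≤ r → r ≤ 1 →
      ∀ θ : EuclideanSpace ℝ (Fin n), ‖θ‖ = 1 → ∀ m : ℕ,
        (∫ ω in Metric.sphere (0 : EuclideanSpace ℝ (Fin n)) 1,
            ‖(negSphereLaplacian^[m]
                (fun ζ => Complex.exp (Complex.I * (κ * r) * (⟪θ, ζ⟫ : ℝ)))) ω‖ ^ 2
          ∂(μH[(n : ℝ) - 1])) ^ (1 / 2 : ℝ)
        ≤ C * (C * m * κ) ^ (2 * m) := by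
  obtain ⟨C, hC, hbound⟩ := stmt_7_general n
  refine ⟨C, hC, fun κ r hκ hr0 hr1 θ hθ m => ?_⟩
  have hκr : |κ * r| ≤ κ := by
    rw [abs_of_nonneg (by positivity)]
    exact mul_le_of_le_one_right (by positivity) hr1
  simpa using hbound κ 1 (fun z => Complex.exp (Complex.I * (κ * r) * z)) hκ (by fun_prop)
    (fun z => by simpa using norm_exp_I_mul_mul_le hκr z) θ hθ m
end

section
/- There exists a constant C(n) such that for every κ > 0 and every f ∈ L²(S^{n−1}), the Herglotz wave function (P_κ f)(x) = ∫_{S^{n−1}} e^{iκ ω·x} f(ω) dS(ω) satisfies κ^{(n−1)/2} ‖P_κ f‖_{L²(B₁)} ≤ C(n) ‖f‖_{L²(S^{n−1})}, equivalently (1/κ) ∫_{B_κ} |(f dS)^∧(ξ)|² dξ ≤ C(n)² ‖f‖²_{L²(S^{n−1})}. -/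
open scoped RealInnerProductSpace
open MeasureTheory

open Set Metric Module
open scoped ENNReal NNReal ComplexConjugate

/-!
The indicator of a ball of radius `R` is at most `e * exp (-‖x‖² / R²)`. Integrating the squared
modulus of the Fourier transform of `f μ` against this Gaussian, expanding the square and using
Fubini gives a quadratic form in `f` whose kernel is the Fourier transform of the Gaussian at
`ω - η`, a multiple of `exp (-R² ‖ω - η‖² / 4)`. By Schur's test this form is bounded on `L²(μ)` by
`sup_ω ∫ exp (-R² ‖ω - η‖² / 4) dμ(η)`, which is `O(R ^ (-s))` as soon as balls of radius `r` have
`μ`-measure `O(r ^ s)`. Surface measure has this property with `s = n - 1`: near a point `v` of the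
sphere, a change of height is controlled by the horizontal displacement, so the orthogonal
projection to `vᗮ` is bi-Lipschitz there.
-/

theorem hausdorffMeasure_le_image_of_edist_le {X Y : Type*} [EMetricSpace X] [EMetricSpace Y]
    [MeasurableSpace X] [BorelSpace X] [MeasurableSpace Y] [BorelSpace Y]
    {φ : X → Y} {K : ℝ≥0} {d : ℝ} {t : Set X} (hd : 0 ≤ d)
    (hφ : ∀ x ∈ t, ∀ y ∈ t, edist x y ≤ K * edist (φ x) (φ y)) :
    μH[d] t ≤ K ^ d * μH[d] (φ '' t) := by
  have hanti : AntilipschitzWith K (t.domRestrict φ) := fun x y => hφ x x.2 y y.2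
  calc μH[d] t = μH[d] (univ : Set t) := by
        rw [← (isometry_subtype_coe (s := t)).hausdorffMeasure_image (Or.inl hd), image_univ,
          Subtype.range_coe]
    _ ≤ K ^ d * μH[d] (φ '' t) := by
        simpa only [image_univ, range_domRestrict] using hanti.le_hausdorffMeasure_image hd univ

/-- `μ` is upper Ahlfors regular of exponent `s` with constant `A`: the `μ`-measure of every ball
of radius `r` is at most `A * r ^ s`. This is the only property of the surface measure of the
sphere that the estimate needs. -/
def IsUpperAhlforsRegular {α : Type*} [PseudoMetricSpace α] [MeasurableSpace α]
    (μ : Measure α) (s : ℝ) (A : ℝ≥0) : Prop :=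
  ∀ (x : α) (r : ℝ), 0 < r → μ (closedBall x r) ≤ A * ENNReal.ofReal (r ^ s)

section Sphere

variable {E : Type*} [NormedAddCommGroup E] [InnerProductSpace ℝ E]

theorem norm_sq_eq_inner_sq_add_norm_sq_orthogonalProjectionOnto {v : E} (hv : ‖v‖ = 1) (x : E) :
    ‖x‖ ^ 2 = ⟪v, x⟫ ^ 2 + ‖(ℝ ∙ v)ᗮ.orthogonalProjectionOnto x‖ ^ 2 := by
  have hproj : ‖(ℝ ∙ v).orthogonalProjectionOnto x‖ = |⟪v, x⟫| := by
    rw [← Submodule.norm_coe, Submodule.coe_orthogonalProjectionOnto_apply,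
      Submodule.starProjection_unit_singleton ℝ hv, norm_smul, hv, mul_one, Real.norm_eq_abs]
  rw [Submodule.norm_sq_eq_add_norm_sq_projection x (ℝ ∙ v), hproj, sq_abs]

theorem abs_inner_sub_mul_le_of_mem_sphere {c : ℝ} {v x y : E} (hv : ‖v‖ = 1)
    (hx : ‖x‖ = 1) (hy : ‖y‖ = 1) (hcx : c ≤ ⟪v, x⟫) (hcy : c ≤ ⟪v, y⟫) :
    |⟪v, x - y⟫| * c ≤ ‖(ℝ ∙ v)ᗮ.orthogonalProjectionOnto (x - y)‖ := by
  have hx2 := norm_sq_eq_inner_sq_add_norm_sq_orthogonalProjectionOnto hv x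
  have hy2 := norm_sq_eq_inner_sq_add_norm_sq_orthogonalProjectionOnto hv y
  have hpx := (ℝ ∙ v)ᗮ.norm_orthogonalProjectionOnto_apply_le x
  have hpy := (ℝ ∙ v)ᗮ.norm_orthogonalProjectionOnto_apply_le y
  rw [inner_sub_right, map_sub]
  set px := (ℝ ∙ v)ᗮ.orthogonalProjectionOnto x
  set py := (ℝ ∙ v)ᗮ.orthogonalProjectionOnto y
  have hsq : (⟪v, x⟫ - ⟪v, y⟫) * (⟪v, x⟫ + ⟪v, y⟫) = (‖py‖ - ‖px‖) * (‖py‖ + ‖px‖) := by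
    rw [hx] at hx2
    rw [hy] at hy2
    linarith
  have hdouble : |⟪v, x⟫ - ⟪v, y⟫| * (2 * c) ≤ ‖px - py‖ * 2 :=
    calc |⟪v, x⟫ - ⟪v, y⟫| * (2 * c) ≤ |⟪v, x⟫ - ⟪v, y⟫| * |⟪v, x⟫ + ⟪v, y⟫| := by
          gcongr
          exact le_trans (by linarith) (le_abs_self _)
      _ = |‖py‖ - ‖px‖| * (‖py‖ + ‖px‖) := by
          rw [← abs_mul, hsq, abs_mul, abs_of_nonneg (by positivity : 0 ≤ ‖py‖ + ‖px‖)]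
      _ ≤ ‖px - py‖ * 2 := by
          rw [norm_sub_rev px py]
          gcongr
          · exact abs_norm_sub_norm_le py px
          · linarith
  linarith

theorem norm_sub_le_mul_norm_orthogonalProjectionOnto_sub {c : ℝ} (hc : 0 < c) {v x y : E}
    (hv : ‖v‖ = 1) (hx : ‖x‖ = 1) (hy : ‖y‖ = 1) (hcx : c ≤ ⟪v, x⟫) (hcy : c ≤ ⟪v, y⟫) :
    ‖x - y‖ ≤ (1 + c⁻¹) * ‖(ℝ ∙ v)ᗮ.orthogonalProjectionOnto (x - y)‖ := by
  have hinner := abs_inner_sub_mul_le_of_mem_sphere hv hx hy hcx hcy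
  rw [← le_div_iff₀ hc, div_eq_inv_mul] at hinner
  have hpyth := norm_sq_eq_inner_sq_add_norm_sq_orthogonalProjectionOnto hv (x - y)
  set p := ‖(ℝ ∙ v)ᗮ.orthogonalProjectionOnto (x - y)‖
  have hp : 0 ≤ p := norm_nonneg _
  have hle : ‖x - y‖ ≤ |⟪v, x - y⟫| + p := by
    refine le_of_sq_le_sq ?_ (by positivity)
    rw [hpyth, ← sq_abs ⟪v, x - y⟫]
    nlinarith [abs_nonneg ⟪v, x - y⟫]
  linarith

theorem half_le_inner_of_norm_sub_le_one {v y : E} (hv : ‖v‖ = 1) (hy : ‖y‖ = 1)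
    (hvy : ‖y - v‖ ≤ 1) : 1 / 2 ≤ ⟪v, y⟫ := by
  have h := norm_sub_sq_real y v
  rw [hv, hy, real_inner_comm] at h
  nlinarith [norm_nonneg (y - v)]

variable [MeasurableSpace E] [BorelSpace E] (m : ℕ)

theorem isAddHaarMeasure_hausdorffMeasure_euclideanSpace :
    (μH[(m : ℝ)] : Measure (EuclideanSpace ℝ (Fin m))).IsAddHaarMeasure := by
  simpa only [finrank_euclideanSpace_fin] using
    isAddHaarMeasure_hausdorffMeasure (E := EuclideanSpace ℝ (Fin m))

variable [Fact (finrank ℝ E = m + 1)]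

theorem hausdorffMeasure_sphere_inter_closedBall_le {v : E} (hv : v ∈ sphere (0 : E) 1)
    {r : ℝ} (hr₀ : 0 ≤ r) (hr₁ : r ≤ 1) :
    μH[(m : ℝ)] (sphere (0 : E) 1 ∩ closedBall v r) ≤
      3 ^ m * ENNReal.ofReal (r ^ m) * μH[(m : ℝ)] (ball (0 : EuclideanSpace ℝ (Fin m)) 1) := by
  rw [mem_sphere_zero_iff_norm] at hv
  have hv₀ : v ≠ 0 := norm_ne_zero_iff.1 (by rw [hv]; exact one_ne_zero)
  let e := (OrthonormalBasis.fromOrthogonalSpanSingleton (𝕜 := ℝ) m hv₀).repr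
  let φ : E → EuclideanSpace ℝ (Fin m) := fun x => e ((ℝ ∙ v)ᗮ.orthogonalProjectionOnto x)
  have hφ (x y : E) : dist (φ x) (φ y) = ‖(ℝ ∙ v)ᗮ.orthogonalProjectionOnto (x - y)‖ := by
    rw [map_sub, ← dist_eq_norm]
    exact e.dist_map _ _
  have hchart : ∀ x ∈ sphere (0 : E) 1 ∩ closedBall v r, ∀ y ∈ sphere (0 : E) 1 ∩ closedBall v r,
      edist x y ≤ (3 : ℝ≥0) * edist (φ x) (φ y) := by
    rintro x ⟨hx, hxv⟩ y ⟨hy, hyv⟩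
    rw [mem_sphere_zero_iff_norm] at hx hy
    rw [mem_closedBall_iff_norm] at hxv hyv
    have h := norm_sub_le_mul_norm_orthogonalProjectionOnto_sub one_half_pos hv hx hy
      (half_le_inner_of_norm_sub_le_one hv hx (hxv.trans hr₁))
      (half_le_inner_of_norm_sub_le_one hv hy (hyv.trans hr₁))
    rw [← hφ, ← dist_eq_norm, one_div, inv_inv] at h
    rw [edist_nndist, edist_nndist, ← ENNReal.coe_mul, ENNReal.coe_le_coe, ← NNReal.coe_le_coe]
    simpa only [NNReal.coe_mul, coe_nndist, show (1 : ℝ) + 2 = (3 : ℝ≥0) by norm_num] using h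
  have himage : φ '' (sphere (0 : E) 1 ∩ closedBall v r) ⊆ closedBall (φ v) r := by
    rintro _ ⟨x, ⟨-, hx⟩, rfl⟩
    rw [mem_closedBall, hφ]
    exact (Submodule.norm_orthogonalProjectionOnto_apply_le _ _).trans
      (mem_closedBall_iff_norm.1 hx)
  have := isAddHaarMeasure_hausdorffMeasure_euclideanSpace m
  calc _ ≤ ((3 : ℝ≥0) : ℝ≥0∞) ^ (m : ℝ) * μH[(m : ℝ)] (closedBall (φ v) r) :=
        (hausdorffMeasure_le_image_of_edist_le m.cast_nonneg hchart).trans (by gcongr)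
    _ = _ := by
        rw [Measure.addHaar_closedBall _ _ hr₀, finrank_euclideanSpace_fin, ENNReal.rpow_natCast,
          mul_assoc, ENNReal.coe_ofNat]

theorem hausdorffMeasure_sphere_lt_top_s19 : μH[(m : ℝ)] (sphere (0 : E) 1) < ∞ := by
  have : FiniteDimensional ℝ E := .of_fact_finrank_eq_succ m
  refine (isCompact_sphere (0 : E) 1).measure_lt_top_of_nhdsWithin fun v hv => ?_
  refine ⟨sphere 0 1 ∩ closedBall v 1, inter_mem_nhdsWithin _ (closedBall_mem_nhds v one_pos), ?_⟩
  refine (hausdorffMeasure_sphere_inter_closedBall_le m hv zero_le_one le_rfl).trans_lt ?_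
  have := isAddHaarMeasure_hausdorffMeasure_euclideanSpace m
  exact ENNReal.mul_lt_top (by finiteness) measure_ball_lt_top

theorem exists_isUpperAhlforsRegular_hausdorffMeasure_sphere :
    ∃ A : ℝ≥0, IsUpperAhlforsRegular ((μH[(m : ℝ)]).restrict (sphere (0 : E) 1)) m A := by
  set σ := μH[(m : ℝ)] (sphere (0 : E) 1)
  set β := μH[(m : ℝ)] (ball (0 : EuclideanSpace ℝ (Fin m)) 1)
  have hσ : σ < ∞ := hausdorffMeasure_sphere_lt_top_s19 m
  have hβ : β < ∞ :=
    have := isAddHaarMeasure_hausdorffMeasure_euclideanSpace m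
    measure_ball_lt_top
  have hA : (3 ^ m * β + σ) * 2 ^ m ≠ ∞ := by finiteness [hσ.ne, hβ.ne]
  refine ⟨((3 ^ m * β + σ) * 2 ^ m).toNNReal, fun x r hr => ?_⟩
  have hscale : ENNReal.ofReal ((2 * r) ^ m) = 2 ^ m * ENNReal.ofReal (r ^ m) := by
    rw [mul_pow, ENNReal.ofReal_mul (by positivity), ENNReal.ofReal_pow zero_le_two,
      ENNReal.ofReal_ofNat]
  rw [Measure.restrict_apply isClosed_closedBall.measurableSet, inter_comm, Real.rpow_natCast,
    ENNReal.coe_toNNReal hA, mul_assoc, ← hscale, add_mul]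
  rcases le_total (2 * r) 1 with hr₁ | hr₁
  · refine le_add_right ?_
    rcases (sphere (0 : E) 1 ∩ closedBall x r).eq_empty_or_nonempty with hempty | ⟨v, hv, hvx⟩
    · simp only [hempty, measure_empty, zero_le]
    have hsub : closedBall x r ⊆ closedBall v (2 * r) :=
      closedBall_subset_closedBall' (by rw [mem_closedBall, dist_comm] at hvx; linarith)
    calc _ ≤ μH[(m : ℝ)] (sphere (0 : E) 1 ∩ closedBall v (2 * r)) := by gcongr
      _ ≤ 3 ^ m * ENNReal.ofReal ((2 * r) ^ m) * β :=
          hausdorffMeasure_sphere_inter_closedBall_le m hv (by positivity) hr₁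
      _ = _ := mul_right_comm _ _ _
  · refine le_add_left ((measure_mono inter_subset_left).trans (le_mul_of_one_le_right' ?_))
    exact ENNReal.one_le_ofReal.2 (one_le_pow₀ hr₁)

end Sphere

section SchurTest

variable {α : Type*} [MeasurableSpace α] {μ : Measure α} [SFinite μ]

theorem two_mul_mul_le_add_sq {R : Type*} [CommSemiring R] [LinearOrder R]
    [CanonicallyOrderedAdd R] (a b : R) : 2 * (a * b) ≤ a ^ 2 + b ^ 2 := by
  wlog hab : a ≤ b generalizing a b
  · rw [mul_comm a, add_comm]
    exact this b a (le_of_not_ge hab)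
  obtain ⟨c, rfl⟩ := exists_add_of_le hab
  calc 2 * (a * (a + c)) ≤ 2 * (a * (a + c)) + c ^ 2 := le_self_add
    _ = a ^ 2 + (a + c) ^ 2 := by ring

theorem lintegral_prod_mul_mul_le_of_symm {K : α → α → ℝ≥0∞}
    (hK : Measurable (Function.uncurry K)) (hsymm : ∀ x y, K x y = K y x) {D : ℝ≥0∞}
    (hD : ∀ x, ∫⁻ y, K x y ∂μ ≤ D) {g : α → ℝ≥0∞} (hg : AEMeasurable g μ) :
    ∫⁻ p, K p.1 p.2 * (g p.1 * g p.2) ∂μ.prod μ ≤ D * ∫⁻ x, g x ^ 2 ∂μ := by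
  have hfst : AEMeasurable (fun p : α × α => K p.1 p.2 * g p.1 ^ 2) (μ.prod μ) :=
    hK.aemeasurable.mul (hg.comp_fst.pow_const 2)
  have hrow : ∫⁻ p, K p.1 p.2 * g p.1 ^ 2 ∂μ.prod μ ≤ D * ∫⁻ x, g x ^ 2 ∂μ := by
    rw [lintegral_prod _ hfst, ← lintegral_const_mul'' _ (hg.pow_const 2)]
    refine lintegral_mono fun x => ?_
    dsimp only
    rw [lintegral_mul_const _ hK.of_uncurry_left]
    gcongr
    exact hD x
  have hcol : ∫⁻ p, K p.1 p.2 * g p.2 ^ 2 ∂μ.prod μ = ∫⁻ p, K p.1 p.2 * g p.1 ^ 2 ∂μ.prod μ := by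
    rw [← lintegral_prod_swap]
    exact lintegral_congr fun p => by rw [Prod.fst_swap, Prod.snd_swap, hsymm]
  rw [← ENNReal.mul_le_mul_iff_right two_ne_zero ENNReal.ofNat_ne_top]
  calc 2 * ∫⁻ p, K p.1 p.2 * (g p.1 * g p.2) ∂μ.prod μ
      = ∫⁻ p, K p.1 p.2 * (2 * (g p.1 * g p.2)) ∂μ.prod μ := by
        rw [← lintegral_const_mul' _ _ ENNReal.ofNat_ne_top]
        simp only [mul_left_comm]
    _ ≤ ∫⁻ p, K p.1 p.2 * g p.1 ^ 2 + K p.1 p.2 * g p.2 ^ 2 ∂μ.prod μ := by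
        refine lintegral_mono fun p => ?_
        rw [← mul_add]
        gcongr
        exact two_mul_mul_le_add_sq _ _
    _ = 2 * ∫⁻ p, K p.1 p.2 * g p.1 ^ 2 ∂μ.prod μ := by
        rw [lintegral_add_left' hfst, hcol, two_mul]
    _ ≤ 2 * (D * ∫⁻ x, g x ^ 2 ∂μ) := by gcongr

end SchurTest

section ExponentialIntegral

theorem lintegral_ofReal_exp_neg_eq_lintegral_meas_lt_mul {α : Type*} [MeasurableSpace α]
    (μ : Measure α) [SFinite μ] {φ : α → ℝ} (hφ : Measurable φ) :
    ∫⁻ y, ENNReal.ofReal (Real.exp (-φ y)) ∂μ =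
      ∫⁻ u, μ {y | φ y < u} * ENNReal.ofReal (Real.exp (-u)) := by
  have htail (t : ℝ) : ENNReal.ofReal (Real.exp (-t)) =
      ∫⁻ u, (Ioi t).indicator (fun u => ENNReal.ofReal (Real.exp (-u))) u := by
    rw [lintegral_indicator measurableSet_Ioi, ← integral_exp_neg_Ioi,
      ofReal_integral_eq_lintegral_ofReal (integrableOn_exp_neg_Ioi t)
        (.of_forall fun u => (Real.exp_pos _).le)]
  have hmeas : Measurable (Function.uncurry fun (y : α) (u : ℝ) =>
      (Ioi (φ y)).indicator (fun u => ENNReal.ofReal (Real.exp (-u))) u) :=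
    Measurable.indicator (f := fun p : α × ℝ => ENNReal.ofReal (Real.exp (-p.2)))
      (by fun_prop) (measurableSet_lt (hφ.comp measurable_fst) measurable_snd)
  rw [lintegral_congr fun y => htail (φ y), lintegral_lintegral_swap hmeas.aemeasurable]
  refine lintegral_congr fun u => ?_
  rw [mul_comm, ← lintegral_indicator_const (measurableSet_lt hφ measurable_const)]
  rfl

theorem lintegral_Ioi_ofReal_exp_neg_mul_rpow {a : ℝ} (ha : -1 < a) :
    ∫⁻ u in Ioi 0, ENNReal.ofReal (Real.exp (-u) * u ^ a) =
      ENNReal.ofReal (Real.Gamma (a + 1)) := by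
  have hint := Real.GammaIntegral_convergent (s := a + 1) (by linarith)
  rw [Real.Gamma_eq_integral (by linarith)]
  simp only [add_sub_cancel_right] at hint ⊢
  refine (ofReal_integral_eq_lintegral_ofReal hint ?_).symm
  filter_upwards [ae_restrict_mem measurableSet_Ioi] with u hu
  have : 0 < u := hu
  positivity

end ExponentialIntegral

theorem IsUpperAhlforsRegular.lintegral_exp_neg_mul_sq_dist_le {α : Type*} [PseudoMetricSpace α]
    [MeasurableSpace α] [OpensMeasurableSpace α] {μ : Measure α} [SFinite μ] {s : ℝ} {A : ℝ≥0}
    (hμ : IsUpperAhlforsRegular μ s A) (hs : -2 < s) {b : ℝ} (hb : 0 < b) (x : α) :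
    ∫⁻ y, ENNReal.ofReal (Real.exp (-(b * dist x y ^ 2))) ∂μ ≤
      ENNReal.ofReal (A * b ^ (-(s / 2)) * Real.Gamma (s / 2 + 1)) := by
  have hφ : Measurable fun y => b * dist x y ^ 2 := by
    have : Continuous fun y => b * dist x y ^ 2 := by fun_prop
    exact this.measurable
  have hball {u : ℝ} (hu : 0 < u) :
      μ {y | b * dist x y ^ 2 < u} ≤ A * ENNReal.ofReal (b ^ (-(s / 2)) * u ^ (s / 2)) := by
    have hsub : {y | b * dist x y ^ 2 < u} ⊆ closedBall x (√(u / b)) := fun y hy => by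
      rw [mem_closedBall, dist_comm]
      exact Real.le_sqrt_of_sq_le ((le_div_iff₀' hb).2 hy.le)
    have hpow : √(u / b) ^ s = b ^ (-(s / 2)) * u ^ (s / 2) := by
      rw [Real.sqrt_eq_rpow, ← Real.rpow_mul (by positivity), Real.div_rpow hu.le hb.le,
        Real.rpow_neg hb.le, one_div_mul_eq_div, div_eq_inv_mul]
    exact hpow ▸ (measure_mono hsub).trans (hμ x _ (by positivity))
  have hpos : (fun u => μ {y | b * dist x y ^ 2 < u} * ENNReal.ofReal (Real.exp (-u))) ≤
      (Ioi 0).indicator fun u => ENNReal.ofReal (A * b ^ (-(s / 2))) *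
        ENNReal.ofReal (Real.exp (-u) * u ^ (s / 2)) := by
    intro u
    by_cases hu : 0 < u
    · rw [indicator_of_mem (mem_Ioi.2 hu)]
      refine (mul_le_mul_left (hball hu) _).trans_eq ?_
      rw [← ENNReal.ofReal_coe_nnreal, ← ENNReal.ofReal_mul (by positivity),
        ← ENNReal.ofReal_mul (by positivity), ← ENNReal.ofReal_mul (by positivity)]
      ring_nf
    · have hempty : {y | b * dist x y ^ 2 < u} = ∅ :=
        eq_empty_of_forall_notMem fun y hy => hu (lt_of_le_of_lt (by positivity) hy)
      simp only [hempty, measure_empty, zero_mul, zero_le]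
  calc _ ≤ ∫⁻ u in Ioi 0, ENNReal.ofReal (A * b ^ (-(s / 2))) *
        ENNReal.ofReal (Real.exp (-u) * u ^ (s / 2)) := by
        rw [lintegral_ofReal_exp_neg_eq_lintegral_meas_lt_mul μ hφ,
          ← lintegral_indicator measurableSet_Ioi]
        exact lintegral_mono hpos
    _ = _ := by
        rw [lintegral_const_mul' _ _ ENNReal.ofReal_ne_top,
          lintegral_Ioi_ofReal_exp_neg_mul_rpow (by linarith), ← ENNReal.ofReal_mul (by positivity)]

section FourierExtension

variable {E : Type*} [NormedAddCommGroup E] [InnerProductSpace ℝ E] [MeasurableSpace E]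

/-- The Fourier transform of the measure `f μ`, evaluated at `-x` and normalised without `2π`.
If `μ` is the surface measure of the unit sphere, then `x ↦ fourierExtension μ f (κ • x)` is the
Herglotz wave function `P_κ f`. -/
noncomputable def fourierExtension (μ : Measure E) (f : E → ℂ) (x : E) : ℂ :=
  ∫ ω, Complex.exp (Complex.I * (⟪ω, x⟫ : ℝ)) * f ω ∂μ

variable {μ ν : Measure E} {f γ : E → ℂ}

theorem fourierExtension_eq_fourierIntegral (μ : Measure E) (f : E → ℂ) :
    fourierExtension μ f = VectorFourier.fourierIntegral Real.probChar μ (-innerₗ E) f := by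
  ext x
  refine integral_congr_ae (.of_forall fun ω => ?_)
  simp only [LinearMap.neg_apply, neg_neg, innerₗ_apply_apply, Circle.smul_def,
    Real.probChar_apply, smul_eq_mul, mul_comm Complex.I]

theorem norm_fourierExtension_le_integral_norm (x : E) :
    ‖fourierExtension μ f x‖ ≤ ∫ ω, ‖f ω‖ ∂μ := by
  rw [fourierExtension_eq_fourierIntegral]
  exact VectorFourier.norm_fourierIntegral_le_integral_norm ..

theorem sq_norm_fourierExtension [SFinite μ] (x : E) :
    ((‖fourierExtension μ f x‖ ^ 2 : ℝ) : ℂ) =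
      ∫ p, Complex.exp (Complex.I * (⟪p.1 - p.2, x⟫ : ℝ)) * (f p.1 * conj (f p.2)) ∂μ.prod μ := by
  rw [← Complex.normSq_eq_norm_sq, ← Complex.mul_conj, fourierExtension, ← integral_conj,
    ← integral_prod_mul]
  refine integral_congr_ae (.of_forall fun p => ?_)
  have hphase : Complex.exp (Complex.I * (⟪p.1 - p.2, x⟫ : ℝ)) =
      Complex.exp (Complex.I * (⟪p.1, x⟫ : ℝ)) *
        conj (Complex.exp (Complex.I * (⟪p.2, x⟫ : ℝ))) := by
    rw [← Complex.exp_conj, ← Complex.exp_add, inner_sub_left]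
    simp only [map_mul, Complex.conj_I, Complex.conj_ofReal, Complex.ofReal_sub]
    ring_nf
  simp only [hphase, map_mul]
  ring

variable [BorelSpace E]

theorem continuous_fourierExtension (hf : Integrable f μ) : Continuous (fourierExtension μ f) := by
  rw [fourierExtension_eq_fourierIntegral]
  refine VectorFourier.fourierIntegral_continuous Real.continuous_probChar ?_ hf
  simp only [LinearMap.neg_apply, innerₗ_apply_apply]
  fun_prop

theorem integrable_mul_sq_norm_fourierExtension {w : E → ℝ} (hw : Integrable w ν)
    (hf : Integrable f μ) : Integrable (fun x => w x * ‖fourierExtension μ f x‖ ^ 2) ν := by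
  have hmeas := ((continuous_fourierExtension hf).norm.pow 2).stronglyMeasurable
  refine hw.mul_bdd (c := (∫ ω, ‖f ω‖ ∂μ) ^ 2) hmeas.aestronglyMeasurable (.of_forall fun x => ?_)
  rw [norm_pow, norm_norm]
  gcongr
  exact norm_fourierExtension_le_integral_norm x

theorem integral_mul_sq_norm_fourierExtension [SecondCountableTopology E] [SFinite μ] [SFinite ν]
    (hγ : Integrable γ ν) (hf : Integrable f μ) :
    ∫ x, γ x * ((‖fourierExtension μ f x‖ ^ 2 : ℝ) : ℂ) ∂ν =
      ∫ p, fourierExtension ν γ (p.1 - p.2) * (f p.1 * conj (f p.2)) ∂μ.prod μ := by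
  have hff : Integrable (fun p : E × E => f p.1 * conj (f p.2)) (μ.prod μ) :=
    hf.mul_prod (Complex.conjLIE.integrable_comp_iff.2 hf)
  have hint : Integrable (fun q : E × E × E =>
      Complex.exp (Complex.I * (⟪q.2.1 - q.2.2, q.1⟫ : ℝ)) *
        (γ q.1 * (f q.2.1 * conj (f q.2.2)))) (ν.prod (μ.prod μ)) := by
    refine (hγ.mul_prod hff).bdd_mul (c := 1) (Continuous.aestronglyMeasurable (by fun_prop))
      (.of_forall fun q => ?_)
    rw [mul_comm, Complex.norm_exp_ofReal_mul_I]
  calc _ = ∫ x, ∫ p, Complex.exp (Complex.I * (⟪p.1 - p.2, x⟫ : ℝ)) *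
        (γ x * (f p.1 * conj (f p.2))) ∂μ.prod μ ∂ν := by
        simp only [sq_norm_fourierExtension, ← integral_const_mul, mul_left_comm (γ _)]
    _ = _ := by
        rw [integral_integral_swap hint]
        simp only [fourierExtension, ← integral_mul_const, real_inner_comm, mul_assoc]

variable [FiniteDimensional ℝ E]

theorem integrable_exp_neg_mul_sq_norm {b : ℝ} (hb : 0 < b) :
    Integrable fun x : E => Real.exp (-(b * ‖x‖ ^ 2)) := by
  refine (GaussianFourier.integrable_cexp_neg_mul_sq_norm_add (b := b) hb 0 (0 : E)).norm.congr
    (.of_forall fun x => ?_)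
  simp only [Complex.norm_exp, zero_mul, add_zero]
  norm_cast
  rw [neg_mul]

theorem fourierExtension_exp_neg_mul_sq_norm {b : ℝ} (hb : 0 < b) (w : E) :
    fourierExtension volume (fun x : E => (Real.exp (-(b * ‖x‖ ^ 2)) : ℂ)) w =
      (((Real.pi / b) ^ ((finrank ℝ E : ℝ) / 2) *
        Real.exp (-((4 * b)⁻¹ * ‖w‖ ^ 2)) : ℝ) : ℂ) := by
  calc _ = ∫ x : E, Complex.exp (-(b : ℂ) * ‖x‖ ^ 2 + Complex.I * (⟪w, x⟫ : ℝ)) := by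
        refine integral_congr_ae (.of_forall fun x => ?_)
        simp only [Complex.exp_add, real_inner_comm, mul_comm]
        push_cast
        ring_nf
    _ = _ := by
        rw [GaussianFourier.integral_cexp_neg_mul_sq_norm_add (b := b) hb, Complex.I_sq]
        push_cast [Complex.ofReal_cpow (div_pos Real.pi_pos hb).le]
        ring_nf

theorem ofReal_integral_exp_neg_mul_sq_norm_fourierExtension_le [SFinite μ] {b : ℝ} (hb : 0 < b)
    {D : ℝ≥0∞}
    (hD : ∀ x, ∫⁻ y, ENNReal.ofReal (Real.exp (-((4 * b)⁻¹ * dist x y ^ 2))) ∂μ ≤ D)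
    (hf : Integrable f μ) :
    ENNReal.ofReal (∫ x, Real.exp (-(b * ‖x‖ ^ 2)) * ‖fourierExtension μ f x‖ ^ 2) ≤
      ENNReal.ofReal ((Real.pi / b) ^ ((finrank ℝ E : ℝ) / 2)) * (D * ∫⁻ ω, ‖f ω‖ₑ ^ 2 ∂μ) := by
  set G : ℝ := (Real.pi / b) ^ ((finrank ℝ E : ℝ) / 2)
  let K : E → E → ℝ≥0∞ := fun x y => ENNReal.ofReal (Real.exp (-((4 * b)⁻¹ * dist x y ^ 2)))
  have hK : Measurable (Function.uncurry K) := by unfold K Function.uncurry; fun_prop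
  have hKsymm (x y : E) : K x y = K y x := by simp only [K, dist_comm]
  have hkernel (p : E × E) : ‖fourierExtension volume
      (fun x : E => (Real.exp (-(b * ‖x‖ ^ 2)) : ℂ)) (p.1 - p.2) * (f p.1 * conj (f p.2))‖ₑ =
        ENNReal.ofReal G * (K p.1 p.2 * (‖f p.1‖ₑ * ‖f p.2‖ₑ)) := by
    rw [fourierExtension_exp_neg_mul_sq_norm hb, enorm_mul, enorm_mul, RCLike.enorm_conj,
      ← ofReal_norm, Complex.norm_real, Real.norm_of_nonneg (by positivity),
      ENNReal.ofReal_mul (by positivity), ← dist_eq_norm, mul_assoc]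
  calc _ = ‖∫ x, (Real.exp (-(b * ‖x‖ ^ 2)) : ℂ) *
        ((‖fourierExtension μ f x‖ ^ 2 : ℝ) : ℂ)‖ₑ := by
        rw [← ofReal_norm]
        simp only [← Complex.ofReal_mul]
        rw [integral_complex_ofReal, Complex.norm_real,
          Real.norm_of_nonneg (integral_nonneg fun x => by positivity)]
    _ ≤ ∫⁻ p, ENNReal.ofReal G * (K p.1 p.2 * (‖f p.1‖ₑ * ‖f p.2‖ₑ)) ∂μ.prod μ := by
        rw [integral_mul_sq_norm_fourierExtension
          (γ := fun x : E => (Real.exp (-(b * ‖x‖ ^ 2)) : ℂ))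
          (integrable_exp_neg_mul_sq_norm hb).ofReal hf]
        exact (enorm_integral_le_lintegral_enorm _).trans_eq (lintegral_congr hkernel)
    _ ≤ _ := by
        rw [lintegral_const_mul' _ _ ENNReal.ofReal_ne_top]
        gcongr
        exact lintegral_prod_mul_mul_le_of_symm hK hKsymm hD hf.1.enorm

theorem setIntegral_ball_sq_norm_fourierExtension_le_integral_exp {R : ℝ} (hR : 0 < R)
    (hf : Integrable f μ) :
    ∫ x in ball (0 : E) R, ‖fourierExtension μ f x‖ ^ 2 ≤
      Real.exp 1 * ∫ x, Real.exp (-((R ^ 2)⁻¹ * ‖x‖ ^ 2)) * ‖fourierExtension μ f x‖ ^ 2 := by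
  have hint := (integrable_mul_sq_norm_fourierExtension
    (integrable_exp_neg_mul_sq_norm (E := E) (b := (R ^ 2)⁻¹) (by positivity)) hf).const_mul
    (Real.exp 1)
  have hle : ∀ x ∈ ball (0 : E) R, ‖fourierExtension μ f x‖ ^ 2 ≤
      Real.exp 1 * (Real.exp (-((R ^ 2)⁻¹ * ‖x‖ ^ 2)) * ‖fourierExtension μ f x‖ ^ 2) := by
    intro x hx
    rw [← mul_assoc, ← Real.exp_add]
    refine le_mul_of_one_le_left (by positivity) (Real.one_le_exp ?_)
    rw [mem_ball_zero_iff] at hx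
    rw [inv_mul_eq_div, ← sub_eq_add_neg, sub_nonneg]
    exact div_le_one_of_le₀ (by gcongr) (by positivity)
  rw [← integral_const_mul]
  calc _ ≤ ∫ x in ball (0 : E) R, Real.exp 1 *
        (Real.exp (-((R ^ 2)⁻¹ * ‖x‖ ^ 2)) * ‖fourierExtension μ f x‖ ^ 2) :=
        integral_mono_of_nonneg (.of_forall fun x => by positivity) hint.integrableOn
          ((ae_restrict_mem measurableSet_ball).mono hle)
    _ ≤ _ := setIntegral_le_integral hint (.of_forall fun x => by positivity)

end FourierExtension

section AgmonHormander

/-- The square of the constant in the Agmon–Hörmander estimate for a measure on a `d`-dimensional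
space that is upper Ahlfors regular of exponent `s` with constant `A`. -/
noncomputable def agmonHormanderConst (d : ℕ) (s : ℝ) (A : ℝ≥0) : ℝ :=
  Real.exp 1 * Real.pi ^ ((d : ℝ) / 2) * (A * 2 ^ s * Real.Gamma (s / 2 + 1))

variable {E : Type*} [NormedAddCommGroup E] [InnerProductSpace ℝ E] [FiniteDimensional ℝ E]
  [MeasurableSpace E] [BorelSpace E] {μ : Measure E} {f : E → ℂ}

theorem setIntegral_ball_one_sq_norm_fourierExtension_smul {κ : ℝ} (hκ : 0 < κ) :
    ∫ x in ball (0 : E) 1, ‖fourierExtension μ f (κ • x)‖ ^ 2 =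
      κ ^ (-(finrank ℝ E : ℝ)) * ∫ x in ball (0 : E) κ, ‖fourierExtension μ f x‖ ^ 2 := by
  rw [Measure.setIntegral_comp_smul_of_pos volume (fun x => ‖fourierExtension μ f x‖ ^ 2) _ hκ,
    smul_unitBall_of_pos hκ, Real.rpow_neg hκ.le, Real.rpow_natCast, smul_eq_mul]

variable [SFinite μ] {s : ℝ} {A : ℝ≥0}

theorem setIntegral_ball_sq_norm_fourierExtension_le (hμ : IsUpperAhlforsRegular μ s A)
    (hs : -2 < s) {R : ℝ} (hR : 0 < R) (hf : Integrable f μ)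
    (hf₂ : Integrable (fun ω => ‖f ω‖ ^ 2) μ) :
    ∫ x in ball (0 : E) R, ‖fourierExtension μ f x‖ ^ 2 ≤
      agmonHormanderConst (finrank ℝ E) s A * R ^ (finrank ℝ E - s) * ∫ ω, ‖f ω‖ ^ 2 ∂μ := by
  have hΓ : 0 < Real.Gamma (s / 2 + 1) := Real.Gamma_pos_of_pos (by linarith)
  have hschur := hμ.lintegral_exp_neg_mul_sq_dist_le hs (b := (4 * (R ^ 2)⁻¹)⁻¹) (by positivity)
  have hgauss := ofReal_integral_exp_neg_mul_sq_norm_fourierExtension_le (by positivity) hschur hf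
  have hf₂_eq : ∫⁻ ω, ‖f ω‖ₑ ^ 2 ∂μ = ENNReal.ofReal (∫ ω, ‖f ω‖ ^ 2 ∂μ) := by
    rw [ofReal_integral_eq_lintegral_ofReal hf₂ (.of_forall fun ω => by positivity)]
    simp only [ENNReal.ofReal_pow (norm_nonneg _), ofReal_norm]
  rw [hf₂_eq, ← ENNReal.ofReal_mul (by positivity), ← ENNReal.ofReal_mul (by positivity),
    ENNReal.ofReal_le_ofReal_iff (by positivity)] at hgauss
  have hπ : (Real.pi / (R ^ 2)⁻¹) ^ ((finrank ℝ E : ℝ) / 2) =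
      Real.pi ^ ((finrank ℝ E : ℝ) / 2) * R ^ (finrank ℝ E : ℝ) := by
    rw [div_inv_eq_mul, Real.mul_rpow Real.pi_pos.le (by positivity), ← Real.rpow_natCast R 2,
      ← Real.rpow_mul hR.le]
    congr 2
    push_cast
    ring
  have hRs : ((4 * (R ^ 2)⁻¹)⁻¹) ^ (-(s / 2)) = 2 ^ s * R ^ (-s) := by
    rw [show (4 * (R ^ 2)⁻¹)⁻¹ = (R / 2) ^ (2 : ℝ) by rw [Real.rpow_two]; field_simp; norm_num,
      ← Real.rpow_mul (by positivity), Real.div_rpow hR.le zero_le_two, div_eq_mul_inv,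
      ← Real.rpow_neg zero_le_two, mul_comm]
    ring_nf
  calc _ ≤ Real.exp 1 * _ :=
        (setIntegral_ball_sq_norm_fourierExtension_le_integral_exp hR hf).trans
          (mul_le_mul_of_nonneg_left hgauss (by positivity))
    _ = _ := by
        rw [hπ, hRs, agmonHormanderConst, sub_eq_add_neg, Real.rpow_add hR]
        ring

theorem rpow_mul_sqrt_setIntegral_sq_norm_fourierExtension_smul_le
    (hμ : IsUpperAhlforsRegular μ s A) (hs : -2 < s) {κ : ℝ} (hκ : 0 < κ) (hf : Integrable f μ)
    (hf₂ : Integrable (fun ω => ‖f ω‖ ^ 2) μ) :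
    κ ^ (s / 2) * √(∫ x in ball (0 : E) 1, ‖fourierExtension μ f (κ • x)‖ ^ 2) ≤
      √(agmonHormanderConst (finrank ℝ E) s A) * √(∫ ω, ‖f ω‖ ^ 2 ∂μ) := by
  have hsqrt : κ ^ (s / 2) = √(κ ^ s) := by
    rw [Real.sqrt_eq_rpow, ← Real.rpow_mul hκ.le, mul_one_div]
  rw [hsqrt, ← Real.sqrt_mul (by positivity), ← Real.sqrt_mul' _ (by positivity)]
  refine Real.sqrt_le_sqrt ?_
  calc _ = κ ^ (s - finrank ℝ E) * ∫ x in ball (0 : E) κ, ‖fourierExtension μ f x‖ ^ 2 := by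
        rw [setIntegral_ball_one_sq_norm_fourierExtension_smul hκ, ← mul_assoc,
          ← Real.rpow_add hκ, sub_eq_add_neg]
    _ ≤ κ ^ (s - finrank ℝ E) * (agmonHormanderConst (finrank ℝ E) s A *
          κ ^ (finrank ℝ E - s) * ∫ ω, ‖f ω‖ ^ 2 ∂μ) := by
        gcongr
        exact setIntegral_ball_sq_norm_fourierExtension_le hμ hs hκ hf hf₂
    _ = κ ^ (s - finrank ℝ E) * κ ^ (finrank ℝ E - s) *
          (agmonHormanderConst (finrank ℝ E) s A * ∫ ω, ‖f ω‖ ^ 2 ∂μ) := by ring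
    _ = _ := by rw [← Real.rpow_add hκ, sub_add_sub_cancel, sub_self, Real.rpow_zero, one_mul]

end AgmonHormander

theorem stmt_19_general {E : Type*} [NormedAddCommGroup E] [InnerProductSpace ℝ E]
    [FiniteDimensional ℝ E] [Nontrivial E] [MeasurableSpace E] [BorelSpace E] :
    ∃ C : ℝ, 0 < C ∧ ∀ κ : ℝ, 0 < κ → ∀ f : E → ℂ,
      Integrable f ((μH[(finrank ℝ E : ℝ) - 1]).restrict (sphere (0 : E) 1)) →
      Integrable (fun ω => ‖f ω‖ ^ 2)
        ((μH[(finrank ℝ E : ℝ) - 1]).restrict (sphere (0 : E) 1)) →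
      κ ^ (((finrank ℝ E : ℝ) - 1) / 2) *
          √(∫ x in ball (0 : E) 1, ‖∫ ω in sphere (0 : E) 1,
            Complex.exp (Complex.I * κ * (⟪ω, x⟫ : ℝ)) * f ω ∂μH[(finrank ℝ E : ℝ) - 1]‖ ^ 2) ≤
        C * √(∫ ω in sphere (0 : E) 1, ‖f ω‖ ^ 2 ∂μH[(finrank ℝ E : ℝ) - 1]) := by
  obtain ⟨m, hm⟩ := Nat.exists_eq_add_one.2 (finrank_pos (R := ℝ) (M := E))
  have : Fact (finrank ℝ E = m + 1) := ⟨hm⟩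
  rw [show (finrank ℝ E : ℝ) - 1 = m by rw [hm]; push_cast; ring]
  have : IsFiniteMeasure ((μH[(m : ℝ)]).restrict (sphere (0 : E) 1)) :=
    isFiniteMeasure_restrict.2 (hausdorffMeasure_sphere_lt_top_s19 m).ne
  obtain ⟨A, hA⟩ := exists_isUpperAhlforsRegular_hausdorffMeasure_sphere (E := E) m
  refine ⟨√(agmonHormanderConst (finrank ℝ E) m A) + 1, by positivity, fun κ hκ f hf hf₂ => ?_⟩
  have hs : (-2 : ℝ) < m := by linarith [(m.cast_nonneg : (0 : ℝ) ≤ m)]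
  refine le_trans (le_of_eq ?_)
    ((rpow_mul_sqrt_setIntegral_sq_norm_fourierExtension_smul_le hA hs hκ hf hf₂).trans ?_)
  · simp only [fourierExtension, real_inner_smul_right, Complex.ofReal_mul, mul_assoc]
  · gcongr
    exact le_add_of_nonneg_right zero_le_one

/-- Scaled Agmon–Hörmander estimate: there is `C(n) > 0` such that for every
`κ > 0` and every `f ∈ L²(S^{n−1})`, the Herglotz wave
`(P_κ f)(x) = ∫_{S^{n−1}} e^{iκω·x} f(ω) dS(ω)` satisfies
`κ^{(n−1)/2} ‖P_κ f‖_{L²(B₁)} ≤ C(n) ‖f‖_{L²(S^{n−1})}`; `dS` is the surface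
(`(n−1)`-Hausdorff) measure on the unit sphere. -/
theorem stmt_19 (n : ℕ) (hn : 2 ≤ n) :
    ∃ C : ℝ, 0 < C ∧ ∀ κ : ℝ, 0 < κ →
      ∀ f : EuclideanSpace ℝ (Fin n) → ℂ,
        Integrable f ((μH[(n : ℝ) - 1]).restrict
          (Metric.sphere (0 : EuclideanSpace ℝ (Fin n)) 1)) →
        Integrable (fun ω => ‖f ω‖ ^ 2) ((μH[(n : ℝ) - 1]).restrict
          (Metric.sphere (0 : EuclideanSpace ℝ (Fin n)) 1)) →
        κ ^ (((n : ℝ) - 1) / 2) *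
          Real.sqrt (∫ x in Metric.ball (0 : EuclideanSpace ℝ (Fin n)) 1,
            ‖∫ ω in Metric.sphere (0 : EuclideanSpace ℝ (Fin n)) 1,
                Complex.exp (Complex.I * κ * (⟪ω, x⟫ : ℝ)) * f ω
              ∂(μH[(n : ℝ) - 1])‖ ^ 2)
        ≤ C * Real.sqrt (∫ ω in Metric.sphere (0 : EuclideanSpace ℝ (Fin n)) 1,
            ‖f ω‖ ^ 2 ∂(μH[(n : ℝ) - 1])) := by
  have : Nontrivial (EuclideanSpace ℝ (Fin n)) :=
    nontrivial_of_finrank_pos (R := ℝ) (by rw [finrank_euclideanSpace_fin]; omega)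
  simpa only [finrank_euclideanSpace_fin] using
    stmt_19_general (E := EuclideanSpace ℝ (Fin n))
end
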